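/- arXiv:2106.04652 — 2 statements merged into one kernel-verified Lean document; each statement's English description precedes it below -/
import Mathlib

section
/- Let u_o : ℝ → ℝ be bounded, continuous and 1-periodic, and assume that for every v ∈ (0,1) the function c ↦ u_o(c+v) − 2u_o(c) + u_o(c−v) vanishes at a point c ∈ [0,1) only when c = 0 or c = 1/2. For each N let λ_i^N be reals, ω_i^N = λ_i^N − λ_{i−1}^N, e_i^N = ω_i^N + u_o(λ_i^N) − u_o(λ_{i−1}^N), and fix x, w ∈ ℝ with: (i) limsup_{ε→0} limsup_{N→∞} max_{i : |i−Nx|<Nε} N·|ω_{i+1}^N − ω_i^N| < ∞ and (ii) the window averages (1/(2Nε)) ∑_{i : |i−Nx|<Nε} e_i^N converge to w as N→∞ and then ε→0. Then: (a) if w ∉ ℤ, the sequence (λ_i^N mod 1) is roughly varying near x, i.e. there is a finite R ≥ 0 such that max_{|i−Nx|≤R} dist(λ_{i+1}^N − λ_i^N, ℤ) does not converge to 0 as N→∞; (b) if moreover w mod 1 ∉ {0, 1/2}, then (e_i^N) is roughly varying near x, i.e. there is a finite R ≥ 0 such that max_{|i−Nx|≤R} |e_{i+1}^N − e_i^N|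 does not converge to 0 as N→∞. -/
/-!
The increments `ω` are locally almost constant at lattice scale: by the Lipschitz bound (i) they
vary by `O(ε)` over a window of half-width `N ε`. The average of `e` over the window differs from
the average of `ω` only by a telescoping boundary term, which is at most `2 M / (2 N ε)` since `u_o`
is bounded. Hence (ii) forces `ω N (⌊N x⌋ + j) → w` for every fixed `j` (`tendsto_omega`).

For (a), the distance of `ω N (⌊N x⌋ + 1)` to `ℤ` therefore tends to the distance of `w` to `ℤ`,
which is positive.

For (b), suppose the increments of `e` at the sites `⌊N x⌋` and `⌊N x⌋ + 1` tend to `0`. Pass to a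
subsequence along which `λ` at `⌊N x⌋` converges modulo `1`, to `a` say. In the limit the second
difference of `u_o` with step `w` vanishes at `a` and at `a + w`. The hypothesis on the zeros places
both points in `{0, 1/2}` modulo `1`, so `2 w` is an integer, which is a contradiction.
-/

open Filter
open scoped Classical

/-- The window of lattice sites around `x` at scale `(N, ε)`:
integers `i` with `|i - N·x| < N·ε`. -/
noncomputable def window (N : ℕ) (x ε : ℝ) : Finset ℤ :=
  (Finset.Icc (Int.ceil ((N : ℝ) * x - (N : ℝ) * ε))
      (Int.floor ((N : ℝ) * x + (N : ℝ) * ε))).filter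
    (fun i => |(i : ℝ) - (N : ℝ) * x| < (N : ℝ) * ε)

/-- The closed window around `x` of (lattice) radius `R`:
integers `i` with `|i - N·x| ≤ R`. -/
noncomputable def cwindow (N : ℕ) (x R : ℝ) : Finset ℤ :=
  (Finset.Icc (Int.ceil ((N : ℝ) * x - R)) (Int.floor ((N : ℝ) * x + R))).filter
    (fun i => |(i : ℝ) - (N : ℝ) * x| ≤ R)

/-- Window average `(1/(2Nε)) ∑_{i : |i−Nx|<Nε} a i`. -/
noncomputable def winAvg (N : ℕ) (x ε : ℝ) (a : ℤ → ℝ) : ℝ :=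
  (1 / (2 * (N : ℝ) * ε)) * ∑ i ∈ window N x ε, a i

/-- Maximum of a (nonnegative) function over a finite set of integers
(0 if the set is empty). -/
noncomputable def fmax (s : Finset ℤ) (f : ℤ → ℝ) : ℝ :=
  ((s.sup fun i => Real.toNNReal (f i) : NNReal) : ℝ)

/-- limsup over `N → ∞`, valued in `EReal` to avoid junk values. -/
noncomputable def elimsup (f : ℕ → ℝ) : EReal :=
  Filter.limsup (fun N => ((f N : ℝ) : EReal)) Filter.atTop

/-- `Q(N,ε) → L` as `N → ∞` and then `ε → 0`. -/
def DTendsto (Q : ℕ → ℝ → ℝ) (L : ℝ) : Prop :=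
  ∀ δ : ℝ, 0 < δ → ∃ ε₀ : ℝ, 0 < ε₀ ∧ ∀ ε : ℝ, 0 < ε → ε < ε₀ →
    elimsup (fun N => |Q N ε - L|) ≤ (δ : EReal)

/-- `limsup_{ε→0} limsup_{N→∞} Q(N,ε) < ∞`. -/
def DBddLimsup (Q : ℕ → ℝ → ℝ) : Prop :=
  ∃ ε₀ : ℝ, 0 < ε₀ ∧ ∃ C : ℝ, ∀ ε : ℝ, 0 < ε → ε < ε₀ →
    elimsup (fun N => Q N ε) ≤ (C : EReal)

/-- Distance from a real number to the nearest integer. -/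
noncomputable def distZ (y : ℝ) : ℝ := |y - round y|

lemma le_fmax {s : Finset ℤ} {f : ℤ → ℝ} {i : ℤ} (hi : i ∈ s) : f i ≤ fmax s f := by
  have h : Real.toNNReal (f i) ≤ s.sup fun i => Real.toNNReal (f i) :=
    Finset.le_sup (f := fun i => Real.toNNReal (f i)) hi
  exact (Real.le_coe_toNNReal _).trans (NNReal.coe_le_coe.2 h)

lemma eventually_lt_of_elimsup_le {f : ℕ → ℝ} {C D : ℝ} (h : elimsup f ≤ (C : EReal))
    (hCD : C < D) : ∀ᶠ N in atTop, f N < D := by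
  have h' : Filter.limsup (fun N => ((f N : ℝ) : EReal)) Filter.atTop < (D : EReal) :=
    lt_of_le_of_lt h (EReal.coe_lt_coe_iff.2 hCD)
  filter_upwards [Filter.eventually_lt_of_limsup_lt h'] with N hN
  exact EReal.coe_lt_coe_iff.1 hN

lemma window_eq_Ioc (N : ℕ) (x ε : ℝ) :
    window N x ε = Finset.Ioc ⌊(N : ℝ) * x - N * ε⌋ (⌈(N : ℝ) * x + N * ε⌉ - 1) := by
  ext i
  simp only [window, Finset.mem_filter, Finset.mem_Icc, Finset.mem_Ioc, Int.ceil_le, Int.le_floor,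
    Int.floor_lt, Int.le_sub_one_iff, Int.lt_ceil, abs_lt]
  constructor
  · rintro ⟨-, h1, h2⟩
    constructor <;> linarith
  · rintro ⟨h1, h2⟩
    refine ⟨⟨?_, ?_⟩, ?_, ?_⟩ <;> linarith

lemma mem_cwindow {N : ℕ} {x R : ℝ} {i : ℤ} (h : |(i : ℝ) - N * x| ≤ R) : i ∈ cwindow N x R := by
  have h' := abs_le.1 h
  simp only [cwindow, Finset.mem_filter, Finset.mem_Icc, Int.ceil_le, Int.le_floor]
  refine ⟨⟨?_, ?_⟩, h⟩ <;> linarith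

lemma sum_Ioc_sub_pred (f : ℤ → ℝ) {A B : ℤ} (h : A ≤ B) :
    ∑ i ∈ Finset.Ioc A B, (f i - f (i - 1)) = f B - f A := by
  induction B, h using Int.leInduction with
  | base => simp
  | succ n hn ih =>
    have : Finset.Ioc A (n + 1) = insert (n + 1) (Finset.Ioc A n) := by
      ext i; simp only [Finset.mem_Ioc, Finset.mem_insert]; omega
    rw [this, Finset.sum_insert (by simp), ih]
    simp

lemma abs_sub_le_of_step {f : ℤ → ℝ} {A B : ℤ} {K : ℝ}
    (hK : ∀ i ∈ Finset.Ioc A B, |f (i + 1) - f i| ≤ K) {m n : ℤ} (hAm : A < m) (hmn : m ≤ n)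
    (hnB : n ≤ B) : |f n - f m| ≤ ((n : ℝ) - m) * K := by
  induction n, hmn using Int.leInduction with
  | base => simp
  | succ n hn ih =>
    have h1 := ih (by omega)
    have h2 := hK n (Finset.mem_Ioc.2 ⟨by omega, by omega⟩)
    have h3 : |f (n + 1) - f m| ≤ |f (n + 1) - f n| + |f n - f m| := abs_sub_le _ _ _
    push_cast
    linarith

/-- Over an interval of sites, a sequence with steps at most `K` stays within
(number of sites) times `K` of its value at any one of them. -/
lemma abs_sub_le_of_mem_Ioc {f : ℤ → ℝ} {A B : ℤ} {K : ℝ} (hK0 : 0 ≤ K)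
    (hK : ∀ i ∈ Finset.Ioc A B, |f (i + 1) - f i| ≤ K) {m n : ℤ} (hm : m ∈ Finset.Ioc A B)
    (hn : n ∈ Finset.Ioc A B) : |f n - f m| ≤ ((B : ℝ) - A) * K := by
  rw [Finset.mem_Ioc] at hm hn
  have hm1 : (A : ℝ) < m := by exact_mod_cast hm.1
  have hm2 : (m : ℝ) ≤ B := by exact_mod_cast hm.2
  have hn1 : (A : ℝ) < n := by exact_mod_cast hn.1
  have hn2 : (n : ℝ) ≤ B := by exact_mod_cast hn.2
  rcases le_total m n with h | h
  · exact (abs_sub_le_of_step hK hm.1 h hn.2).trans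
      (mul_le_mul_of_nonneg_right (by linarith) hK0)
  · rw [abs_sub_comm]
    exact (abs_sub_le_of_step hK hn.1 h hm.2).trans
      (mul_le_mul_of_nonneg_right (by linarith) hK0)

/-- The deterministic estimate on one window: `n` sites (`n` within `1` of `L = 2 N ε`), the sum `S`
of `e`, the sum `T` of `ω`, and the value `y` of `ω` at one site. -/
lemma window_estimate {L n S T y w M δ η : ℝ} (hL : 2 ≤ L) (hn1 : L - 1 ≤ n) (hn2 : n ≤ L + 1)
    (hS : |S - L * w| ≤ 2 * δ * L) (hST : |S - T| ≤ 2 * M) (hT : |T - n * y| ≤ n * η)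
    (hM : 2 * M + |w| ≤ δ * L) (hδ : 0 < δ) : |y - w| ≤ 6 * δ + η := by
  have hn : 0 < n := by linarith
  have hLw : |(L - n) * w| ≤ |w| := by
    rw [abs_mul]
    exact mul_le_of_le_one_left (abs_nonneg _) (abs_le.2 ⟨by linarith, by linarith⟩)
  have h : n * |y - w| ≤ n * (6 * δ + η) := by
    rw [← abs_of_pos hn, ← abs_mul, abs_of_pos hn]
    have h3 : 3 * δ * L ≤ 6 * δ * n := by nlinarith
    rw [abs_le] at *
    constructor <;> nlinarith
  exact le_of_mul_le_mul_left h hn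

/-- At every site a bounded distance from `N x`, the increment `ω` converges to the mean slope. -/
lemma tendsto_omega
    (u_o : ℝ → ℝ) (hbd : ∃ M : ℝ, ∀ y, |u_o y| ≤ M)
    (lam ω e : ℕ → ℤ → ℝ)
    (he : ∀ N i, e N i = ω N i + u_o (lam N i) - u_o (lam N (i - 1)))
    (x w : ℝ)
    (hi : DBddLimsup (fun N ε =>
      fmax (window N x ε) (fun i => (N : ℝ) * |ω N (i + 1) - ω N i|)))
    (hii : DTendsto (fun N ε => winAvg N x ε (e N)) w) (j : ℤ) :
    Tendsto (fun N : ℕ => ω N (⌊(N : ℝ) * x⌋ + j)) atTop (nhds w) := by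
  obtain ⟨M, hM⟩ := hbd
  obtain ⟨ε₁, hε₁, C, hC⟩ := hi
  rw [Metric.tendsto_atTop']
  intro ρ hρ
  set δ : ℝ := ρ / 20 with hδdef
  have hδ : 0 < δ := by positivity
  set K : ℝ := |C| + 1 with hKdef
  have hK : 0 < K := by positivity
  have hCK : C < K := by have := le_abs_self C; linarith
  obtain ⟨ε₂, hε₂, hE⟩ := hii δ hδ
  obtain ⟨ε, hε, hεlt⟩ := exists_between (lt_min (lt_min hε₁ hε₂) (div_pos hδ hK))
  have hεa : ε < ε₁ := hεlt.trans_le ((min_le_left _ _).trans (min_le_left _ _))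
  have hεb : ε < ε₂ := hεlt.trans_le ((min_le_left _ _).trans (min_le_right _ _))
  have hεc : ε * K < δ := (lt_div_iff₀ hK).1 (hεlt.trans_le (min_le_right _ _))
  have hlarge : Tendsto (fun N : ℕ => (N : ℝ) * ε) atTop atTop :=
    tendsto_natCast_atTop_atTop.atTop_mul_const hε
  have key : ∀ᶠ N : ℕ in atTop, |ω N (⌊(N : ℝ) * x⌋ + j) - w| < ρ := by
    filter_upwards [eventually_lt_of_elimsup_le (hC ε hε hεa) hCK,
      eventually_lt_of_elimsup_le (hE ε hε hεb) (show δ < 2 * δ by linarith),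
      hlarge.eventually_ge_atTop (|(j : ℝ)| + 2), eventually_gt_atTop 0,
      hlarge.eventually_ge_atTop ((2 * M + |w|) / δ)] with N h1 h2 h3 hN0 h4
    have hN : (0 : ℝ) < N := by exact_mod_cast hN0
    have hj := abs_le.1 (le_refl |(j : ℝ)|)
    have hj0 := abs_nonneg (j : ℝ)
    have hwin := window_eq_Ioc N x ε
    simp only [winAvg] at h2
    rw [hwin] at h1 h2
    set A : ℤ := ⌊(N : ℝ) * x - N * ε⌋ with hA
    set B : ℤ := ⌈(N : ℝ) * x + N * ε⌉ - 1 with hB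
    have hA1 : (A : ℝ) ≤ N * x - N * ε := Int.floor_le _
    have hA2 : N * x - N * ε < A + 1 := Int.lt_floor_add_one _
    have hB1 : (B : ℝ) < N * x + N * ε := by
      rw [hB]; push_cast; linarith [Int.ceil_lt_add_one ((N : ℝ) * x + N * ε)]
    have hB2 : N * x + N * ε ≤ B + 1 := by
      rw [hB]; push_cast; linarith [Int.le_ceil ((N : ℝ) * x + N * ε)]
    have hf1 := Int.floor_le ((N : ℝ) * x)
    have hf2 := Int.lt_floor_add_one ((N : ℝ) * x)
    set p : ℤ := ⌊(N : ℝ) * x⌋ + j with hp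
    have hpc : (p : ℝ) = ⌊(N : ℝ) * x⌋ + j := by rw [hp]; push_cast; ring
    have hAp : A < p := by
      have : (A : ℝ) < p := by linarith
      exact_mod_cast this
    have hpB : p ≤ B := by
      have : (p : ℝ) ≤ B := by linarith
      exact_mod_cast this
    have hAB : A ≤ B := by omega
    have hstep : ∀ i ∈ Finset.Ioc A B, |ω N (i + 1) - ω N i| ≤ K / N := by
      intro i hi
      rw [le_div_iff₀ hN, mul_comm]
      exact (le_fmax (f := fun i => (N : ℝ) * |ω N (i + 1) - ω N i|) hi).trans h1.le
    have hcard : ((Finset.Ioc A B).card : ℝ) = (B : ℝ) - A := by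
      rw [Int.card_Ioc]
      have : (((B - A).toNat : ℤ) : ℝ) = ((B - A : ℤ) : ℝ) := by
        rw [Int.toNat_of_nonneg (by omega)]
      push_cast at this
      exact this
    have hT : |∑ i ∈ Finset.Ioc A B, ω N i - ((B : ℝ) - A) * ω N p| ≤
        ((B : ℝ) - A) * (((B : ℝ) - A) * (K / N)) := by
      rw [← hcard, ← nsmul_eq_mul, ← Finset.sum_const, ← Finset.sum_sub_distrib,
        ← nsmul_eq_mul (Finset.Ioc A B).card, ← Finset.sum_const]
      refine (Finset.abs_sum_le_sum_abs _ _).trans (Finset.sum_le_sum fun i hi => ?_)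
      rw [hcard]
      exact abs_sub_le_of_mem_Ioc (by positivity) hstep (Finset.mem_Ioc.2 ⟨hAp, hpB⟩) hi
    have hST : |∑ i ∈ Finset.Ioc A B, e N i - ∑ i ∈ Finset.Ioc A B, ω N i| ≤ 2 * M := by
      rw [← Finset.sum_sub_distrib]
      have : ∑ i ∈ Finset.Ioc A B, (e N i - ω N i) = u_o (lam N B) - u_o (lam N A) := by
        rw [← sum_Ioc_sub_pred (fun i => u_o (lam N i)) hAB]
        refine Finset.sum_congr rfl fun i _ => ?_
        rw [he]; ring
      rw [this]
      linarith [abs_sub (u_o (lam N B)) (u_o (lam N A)), hM (lam N B), hM (lam N A)]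
    have hL : 0 < 2 * (N : ℝ) * ε := by positivity
    have hS : |∑ i ∈ Finset.Ioc A B, e N i - (2 * N * ε) * w| ≤ 2 * δ * (2 * N * ε) := by
      have : ∑ i ∈ Finset.Ioc A B, e N i - (2 * N * ε) * w =
          (1 / (2 * (N : ℝ) * ε) * ∑ i ∈ Finset.Ioc A B, e N i - w) * (2 * N * ε) := by
        field_simp
      rw [this, abs_mul, abs_of_pos hL]
      exact mul_le_mul_of_nonneg_right h2.le hL.le
    have hη : ((B : ℝ) - A) * (K / N) ≤ 4 * δ := by
      have h5 : (B : ℝ) - A ≤ 4 * (N * ε) := by linarith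
      calc ((B : ℝ) - A) * (K / N) ≤ 4 * (N * ε) * (K / N) :=
            mul_le_mul_of_nonneg_right h5 (by positivity)
        _ = 4 * (ε * K) := by field_simp
        _ ≤ 4 * δ := by linarith
    have h6 : 2 * M + |w| ≤ δ * (2 * N * ε) := by
      rw [div_le_iff₀ hδ] at h4
      nlinarith [mul_pos (mul_pos hN hε) hδ]
    have := window_estimate (by linarith) (by linarith) (by linarith) hS hST hT h6 hδ
    have : |ω N p - w| ≤ 10 * δ := by linarith
    linarith
  obtain ⟨n, hn⟩ := eventually_atTop.1 key
  exact ⟨n, fun N hN => by rw [Real.dist_eq]; exact hn N hN.le⟩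

lemma periodic_fract {u : ℝ → ℝ} (hper : ∀ y, u (y + 1) = u y) (c v : ℝ) :
    u (Int.fract c + v) = u (c + v) := by
  have h : Function.Periodic u 1 := hper
  have := h.sub_int_mul_eq (x := c + v) ⌊c⌋
  rw [← this, Int.fract]
  congr 1
  ring

/-- The hypothesis on the zeros of second differences, freed from the normalisation of the
point and the step to the fundamental domain. -/
lemma fract_of_second_diff_eq_zero {u : ℝ → ℝ} (hper : ∀ y, u (y + 1) = u y)
    (hzero : ∀ v : ℝ, 0 < v → v < 1 → ∀ c : ℝ, 0 ≤ c → c < 1 →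
      u (c + v) - 2 * u c + u (c - v) = 0 → c = 0 ∨ c = 1 / 2)
    {w : ℝ} (hw : Int.fract w ≠ 0) {a : ℝ} (h : u (a + w) - 2 * u a + u (a - w) = 0) :
    ∃ k : ℤ, 2 * a = k := by
  have hP : Function.Periodic u 1 := hper
  have h1 : u (Int.fract a + Int.fract w) = u (a + w) := by
    rw [periodic_fract hper, add_comm, periodic_fract hper, add_comm]
  have h2 : u (Int.fract a) = u a := by simpa using periodic_fract hper a 0
  have h3 : u (Int.fract a - Int.fract w) = u (a - w) := by
    have := hP.int_mul ⌊w⌋ (a - w)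
    rw [sub_eq_add_neg, periodic_fract hper, ← this, Int.fract]
    congr 1
    ring
  have h0 := hzero (Int.fract w) (lt_of_le_of_ne (Int.fract_nonneg w) (Ne.symm hw))
    (Int.fract_lt_one w) (Int.fract a) (Int.fract_nonneg a) (Int.fract_lt_one a)
    (by rw [h1, h2, h3]; exact h)
  have ha := Int.floor_add_fract a
  rcases h0 with h0 | h0
  · exact ⟨2 * ⌊a⌋, by push_cast; linarith⟩
  · exact ⟨2 * ⌊a⌋ + 1, by push_cast; linarith⟩

theorem stmt1
    (u_o : ℝ → ℝ) (hbd : ∃ M : ℝ, ∀ y, |u_o y| ≤ M)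
    (hcont : Continuous u_o) (hper : ∀ y, u_o (y + 1) = u_o y)
    (hzero : ∀ v : ℝ, 0 < v → v < 1 → ∀ c : ℝ, 0 ≤ c → c < 1 →
      u_o (c + v) - 2 * u_o c + u_o (c - v) = 0 → c = 0 ∨ c = 1 / 2)
    (lam ω e : ℕ → ℤ → ℝ)
    (hω : ∀ N i, ω N i = lam N i - lam N (i - 1))
    (he : ∀ N i, e N i = ω N i + u_o (lam N i) - u_o (lam N (i - 1)))
    (x w : ℝ)
    (hi : DBddLimsup (fun N ε =>
      fmax (window N x ε) (fun i => (N : ℝ) * |ω N (i + 1) - ω N i|)))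
    (hii : DTendsto (fun N ε => winAvg N x ε (e N)) w) :
    ((∀ n : ℤ, w ≠ (n : ℝ)) →
      ∃ R : ℝ, 0 ≤ R ∧
        ¬ Tendsto (fun N =>
            fmax (cwindow N x R) (fun i => distZ (lam N (i + 1) - lam N i)))
          atTop (nhds 0)) ∧
    ((Int.fract w ≠ 0 ∧ Int.fract w ≠ 1 / 2) →
      ∃ R : ℝ, 0 ≤ R ∧
        ¬ Tendsto (fun N =>
            fmax (cwindow N x R) (fun i => |e N (i + 1) - e N i|))
          atTop (nhds 0)) := by
  have hΩ := tendsto_omega u_o hbd lam ω e he x w hi hii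
  -- Both `⌊N x⌋` and `⌊N x⌋ + 1` lie within distance `1` of `N x`.
  have hmem0 : ∀ N : ℕ, ⌊(N : ℝ) * x⌋ ∈ cwindow N x 1 := fun N =>
    mem_cwindow (abs_le.2 ⟨by linarith [Int.lt_floor_add_one ((N : ℝ) * x)],
      by linarith [Int.floor_le ((N : ℝ) * x)]⟩)
  have hmem1 : ∀ N : ℕ, ⌊(N : ℝ) * x⌋ + 1 ∈ cwindow N x 1 := fun N =>
    mem_cwindow (abs_le.2 ⟨by push_cast; linarith [Int.lt_floor_add_one ((N : ℝ) * x)],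
      by push_cast; linarith [Int.floor_le ((N : ℝ) * x)]⟩)
  constructor
  · intro hw
    refine ⟨1, zero_le_one, fun hT => hw (round w) ?_⟩
    have hlim : Tendsto (fun N : ℕ => |ω N (⌊(N : ℝ) * x⌋ + 1) - w| +
        fmax (cwindow N x 1) (fun i => distZ (lam N (i + 1) - lam N i))) atTop (nhds 0) := by
      have h1 : Tendsto (fun N : ℕ => |ω N (⌊(N : ℝ) * x⌋ + 1) - w|) atTop (nhds 0) := by
        simpa using ((hΩ 1).sub_const w).abs
      simpa using h1.add hT
    have hle : |w - round w| ≤ 0 := by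
      refine ge_of_tendsto' hlim fun N => ?_
      have h1 := le_fmax (f := fun i => distZ (lam N (i + 1) - lam N i)) (hmem0 N)
      have h2 : lam N (⌊(N : ℝ) * x⌋ + 1) - lam N ⌊(N : ℝ) * x⌋ = ω N (⌊(N : ℝ) * x⌋ + 1) := by
        rw [hω]; simp
      simp only [h2, distZ] at h1 ⊢
      have h3 := round_le w (round (ω N (⌊(N : ℝ) * x⌋ + 1)))
      have h4 := abs_sub_le w (ω N (⌊(N : ℝ) * x⌋ + 1)) (round (ω N (⌊(N : ℝ) * x⌋ + 1)))
      rw [abs_sub_comm w (ω N (⌊(N : ℝ) * x⌋ + 1))] at h4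
      linarith
    have := abs_eq_zero.1 (le_antisymm hle (abs_nonneg _))
    linarith
  · rintro ⟨hw0, hw1⟩
    refine ⟨1, zero_le_one, fun hT => ?_⟩
    have hE : ∀ p : ℕ → ℤ, (∀ N, p N ∈ cwindow N x 1) →
        Tendsto (fun N => e N (p N + 1) - e N (p N)) atTop (nhds 0) := fun p hp =>
      squeeze_zero_norm
        (fun N => le_fmax (f := fun i => |e N (i + 1) - e N i|) (hp N)) hT
    have hE0 := hE _ hmem0
    have hE1 := hE _ hmem1
    have hΩ0 := hΩ 0
    have hΩ1 := hΩ 1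
    have hΩ2 := hΩ 2
    obtain ⟨a, -, φ, hφ, ha⟩ := (isCompact_Icc (a := (0 : ℝ)) (b := 1)).tendsto_subseq
      (x := fun N : ℕ => Int.fract (lam N ⌊(N : ℝ) * x⌋))
      (fun N => ⟨Int.fract_nonneg _, (Int.fract_lt_one _).le⟩)
    have hφ' := hφ.tendsto_atTop
    have hu : ∀ {f : ℕ → ℝ} {b : ℝ}, Tendsto f atTop (nhds b) →
        Tendsto (fun n => u_o (f n)) atTop (nhds (u_o b)) := fun h => (hcont.tendsto _).comp h
    replace hΩ0 := hΩ0.comp hφ'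
    replace hΩ1 := hΩ1.comp hφ'
    replace hΩ2 := hΩ2.comp hφ'
    have hD0 : u_o (a + w) - 2 * u_o a + u_o (a - w) = 0 := by
      have hl := (((hΩ1.sub hΩ0).add (hu (ha.add hΩ1))).sub ((hu ha).const_mul 2)).add
        (hu (ha.sub hΩ0))
      have := tendsto_nhds_unique (hl.congr fun n => ?_) (hE0.comp hφ')
      · linarith
      · simp only [Function.comp_apply]
        set N := φ n
        set p := ⌊(N : ℝ) * x⌋
        have e0 : u_o (Int.fract (lam N p)) = u_o (lam N p) := by
          simpa using periodic_fract hper (lam N p) 0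
        rw [sub_eq_add_neg (Int.fract _), periodic_fract hper, periodic_fract hper, e0, he, he,
          hω N (p + 0), hω N (p + 1), hω N p]
        simp only [add_zero, add_sub_cancel_right, add_sub_cancel, neg_sub]
        ring
    have hD1 : u_o (a + w + w) - 2 * u_o (a + w) + u_o (a + w - w) = 0 := by
      have hl := (((hΩ2.sub hΩ1).add (hu ((ha.add hΩ1).add hΩ2))).sub
        ((hu (ha.add hΩ1)).const_mul 2)).add (hu ((ha.add hΩ1).sub hΩ1))
      have := tendsto_nhds_unique (hl.congr fun n => ?_) (hE1.comp hφ')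
      · linarith
      · simp only [Function.comp_apply]
        set N := φ n
        set p := ⌊(N : ℝ) * x⌋
        have e0 : u_o (Int.fract (lam N p)) = u_o (lam N p) := by
          simpa using periodic_fract hper (lam N p) 0
        have hp2 : p + 1 + 1 = p + 2 := by ring
        have hp3 : p + 2 - 1 = p + 1 := by ring
        rw [add_sub_cancel_right, add_assoc (Int.fract _), periodic_fract hper,
          periodic_fract hper, e0, hp2, he, he, hω N (p + 2), hω N (p + 1), hp3,
          add_sub_cancel_right p 1]
        have q1 : lam N p + (lam N (p + 1) - lam N p + (lam N (p + 2) - lam N (p + 1))) =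
          lam N (p + 2) := by ring
        rw [q1, add_sub_cancel]
        ring
    obtain ⟨k, hk⟩ := fract_of_second_diff_eq_zero hper hzero hw0 hD0
    obtain ⟨l, hl⟩ := fract_of_second_diff_eq_zero hper hzero hw0 hD1
    have hwf := Int.floor_add_fract w
    have hm : 2 * Int.fract w = ((l - k - 2 * ⌊w⌋ : ℤ) : ℝ) := by push_cast; linarith
    have hpos := lt_of_le_of_ne (Int.fract_nonneg w) (Ne.symm hw0)
    have hlt := Int.fract_lt_one w
    have h1 : (0 : ℤ) < l - k - 2 * ⌊w⌋ := by
      have : (0 : ℝ) < ((l - k - 2 * ⌊w⌋ : ℤ) : ℝ) := by linarith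
      exact_mod_cast this
    have h2 : l - k - 2 * ⌊w⌋ < 2 := by
      have : ((l - k - 2 * ⌊w⌋ : ℤ) : ℝ) < 2 := by linarith
      exact_mod_cast this
    have h3 : l - k - 2 * ⌊w⌋ = 1 := by omega
    rw [h3] at hm
    apply hw1
    push_cast at hm
    linarith
end

section
/- Fix K > 0. For every R > 0 there exists a constant C(R) > 0 such that for all w, w′ ∈ ℝ with |w| ≤ R and |w′| ≤ R and for every n ∈ ℤ, |μ_K^∞[w](n) − μ_K^∞[w′](n)| ≤ C(R) · |w − w′| · exp(−K n²/3). In particular, if v_{N,ε} → v as N→∞ and then ε→0, then |μ_K^∞[v_{N,ε}](n) − μ_K^∞[v](n)| ≤ C_{N,ε} · exp(−K n²/3) for all n ∈ ℤ with constants C_{N,ε} → 0 in the same double limit. -/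
/-!
On a ball `|x| ≤ r` every Gaussian weight `exp (-K (m - x)²)` and its `x`-derivative are bounded by
a constant times `exp (-(3/4) K m²)`, because `(m - x)² ≥ (5/6) m² - 5 x²` and a linear factor is
absorbed by a tenth of the exponent. Since `Z_K` is bounded below on the ball by its `m = 0` term,
the same bounds hold for `ρ_K[x](m)` and for its Lipschitz constant in `x`
(`rho_bounds`). Summing products over `m` uses
`(3/4) (m² + (m + n)²) ≥ n²/3 + m²/8`, which leaves a summable factor in `m` and the decay
`exp (-K n²/3)` (`gauss_mul_le`). Integrating over `λ ∈ [0, 1]` gives the Lipschitz bound for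
`μ_K^∞` (`muInf_lipschitz`).

For the double limit, the constant is the Lipschitz constant of the fixed ball `|w| ≤ |v| + 1`
times the distance whenever that distance is at most `1`, which is eventually the case; elsewhere
any ball containing both points will do.
-/


/-- Normalization constant `Z_K(λ) = ∑_{m∈ℤ} exp(−K(m−λ)²)`. -/
noncomputable def Zfun (K lam : ℝ) : ℝ :=
  ∑' m : ℤ, Real.exp (-K * ((m : ℝ) - lam) ^ 2)

/-- Discrete Gaussian pmf `ρ_K[λ](n) = exp(−K(n−λ)²)/Z_K(λ)`. -/
noncomputable def rho (K lam : ℝ) (n : ℤ) : ℝ :=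
  Real.exp (-K * ((n : ℝ) - lam) ^ 2) / Zfun K lam

/-- `μ_K[ω,λ](n) = ∑_{m∈ℤ} ρ_K[λ−ω](m) ρ_K[λ](m+n)`. -/
noncomputable def muK (K ω lam : ℝ) (n : ℤ) : ℝ :=
  ∑' m : ℤ, rho K (lam - ω) m * rho K lam (m + n)

/-- `μ_K^∞[ω](n) = ∫_0^1 μ_K[ω,λ](n) dλ`. -/
noncomputable def muInf (K ω : ℝ) (n : ℤ) : ℝ :=
  ∫ lam in (0 : ℝ)..1, muK K ω lam n

/-- The comparison weight `exp (-(3/4) K m²)`, which dominates the discrete Gaussians with centre in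
a bounded set, up to a constant. -/
noncomputable def gw (K : ℝ) (m : ℤ) : ℝ := Real.exp (-(3 / 4 * K) * (m : ℝ) ^ 2)

lemma gw_pos (K : ℝ) (m : ℤ) : 0 < gw K m := Real.exp_pos _

lemma summable_gauss {a : ℝ} (ha : 0 < a) :
    Summable (fun m : ℤ => Real.exp (-a * (m : ℝ) ^ 2)) := by
  have h := summable_pow_mul_jacobiTheta₂_term_bound 0 (T := a / Real.pi) (by positivity) 0
  refine h.congr fun m => ?_
  have : Real.pi ≠ 0 := Real.pi_ne_zero
  simp only [pow_zero, one_mul]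
  congr 1
  field_simp
  ring

lemma summable_gw {K : ℝ} (hK : 0 < K) : Summable (gw K) :=
  summable_gauss (by positivity)

/-- The quadratic-form inequality `(3/4) (m² + (m + n)²) ≥ n²/3 + m²/8` behind the rate `K/3`. -/
lemma gauss_mul_le {K : ℝ} (hK : 0 < K) (m n : ℤ) :
    gw K m * gw K (m + n) ≤
      Real.exp (-K * (n : ℝ) ^ 2 / 3) * Real.exp (-(K / 8) * (m : ℝ) ^ 2) := by
  unfold gw
  rw [← Real.exp_add, ← Real.exp_add, Real.exp_le_exp]
  push_cast
  have h : (n : ℝ) ^ 2 / 3 + (m : ℝ) ^ 2 / 8 ≤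
      3 / 4 * (m : ℝ) ^ 2 + 3 / 4 * ((m : ℝ) + n) ^ 2 := by
    nlinarith [sq_nonneg (5 * (n : ℝ) + 9 * m), sq_nonneg (m : ℝ)]
  nlinarith [mul_le_mul_of_nonneg_left h hK.le]

lemma deriv_weight_le {K r x : ℝ} (hK : 0 < K) (hx : |x| ≤ r) (m : ℤ) :
    (K + K * ((m : ℝ) - x) ^ 2) * Real.exp (-K * ((m : ℝ) - x) ^ 2) ≤
      (K + 10) * Real.exp (5 * K * r ^ 2) * gw K m := by
  set t := (m : ℝ) - x with ht
  have hx2 : x ^ 2 ≤ r ^ 2 := sq_le_sq' (by linarith [(abs_le.1 hx).1]) (abs_le.1 hx).2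
  have h1 : K + K * t ^ 2 ≤ (K + 10) * Real.exp (K / 10 * t ^ 2) := by
    have := Real.add_one_le_exp (K / 10 * t ^ 2)
    have h0 : 0 ≤ K * t ^ 2 := by positivity
    nlinarith [mul_nonneg hK.le h0]
  have h2 : K / 10 * t ^ 2 + -K * t ^ 2 ≤ 5 * K * r ^ 2 + -(3 / 4 * K) * (m : ℝ) ^ 2 := by
    have : 3 / 4 * (m : ℝ) ^ 2 ≤ 9 / 10 * t ^ 2 + 5 * r ^ 2 := by
      rw [ht]
      nlinarith [sq_nonneg ((m : ℝ) - 6 * x), sq_nonneg x]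
    nlinarith [mul_le_mul_of_nonneg_left this hK.le]
  calc (K + K * t ^ 2) * Real.exp (-K * t ^ 2)
      ≤ (K + 10) * Real.exp (K / 10 * t ^ 2) * Real.exp (-K * t ^ 2) := by gcongr
    _ = (K + 10) * Real.exp (K / 10 * t ^ 2 + -K * t ^ 2) := by rw [Real.exp_add]; ring
    _ ≤ (K + 10) * Real.exp (5 * K * r ^ 2 + -(3 / 4 * K) * (m : ℝ) ^ 2) := by gcongr
    _ = _ := by rw [Real.exp_add, gw]; ring

lemma weight_bounds {K : ℝ} (hK : 0 < K) (r : ℝ) :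
    ∃ A : ℝ, 0 < A ∧ ∀ m : ℤ,
      (∀ x, |x| ≤ r → Real.exp (-K * ((m : ℝ) - x) ^ 2) ≤ A * gw K m) ∧
      (∀ x y, |x| ≤ r → |y| ≤ r →
        |Real.exp (-K * ((m : ℝ) - x) ^ 2) - Real.exp (-K * ((m : ℝ) - y) ^ 2)| ≤
          A * gw K m * |x - y|) := by
  set B := (K + 10) * Real.exp (5 * K * r ^ 2) with hB
  have hB0 : 0 < B := by positivity
  refine ⟨B / K + B, by positivity, fun m => ⟨fun x hx => ?_, fun x y hx hy => ?_⟩⟩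
  · have h := deriv_weight_le hK hx m
    have hg := gw_pos K m
    have he := Real.exp_pos (-K * ((m : ℝ) - x) ^ 2)
    have h3 : K * Real.exp (-K * ((m : ℝ) - x) ^ 2) ≤ B * gw K m := by
      refine le_trans ?_ h
      gcongr
      nlinarith [mul_nonneg hK.le (sq_nonneg ((m : ℝ) - x))]
    have h4 : Real.exp (-K * ((m : ℝ) - x) ^ 2) ≤ B / K * gw K m := by
      rw [div_mul_eq_mul_div, le_div_iff₀ hK]; linarith
    nlinarith [mul_pos hB0 hg]
  · have hd : ∀ z ∈ Set.Icc (-r) r, HasDerivWithinAt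
        (fun z : ℝ => Real.exp (-K * ((m : ℝ) - z) ^ 2))
        (Real.exp (-K * ((m : ℝ) - z) ^ 2) * (2 * K * ((m : ℝ) - z))) (Set.Icc (-r) r) z := by
      intro z _
      have h1 : HasDerivAt (fun z : ℝ => -K * ((m : ℝ) - z) ^ 2) (2 * K * ((m : ℝ) - z)) z := by
        have := (((hasDerivAt_id z).const_sub (m : ℝ)).pow 2).const_mul (-K)
        refine this.congr_deriv ?_
        simp
        ring
      exact h1.exp.hasDerivWithinAt
    have hb : ∀ z ∈ Set.Icc (-r) r,
        ‖Real.exp (-K * ((m : ℝ) - z) ^ 2) * (2 * K * ((m : ℝ) - z))‖ ≤ B * gw K m := by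
      intro z hz
      refine le_trans ?_ (deriv_weight_le hK (abs_le.2 hz) m)
      rw [norm_mul, Real.norm_of_nonneg (Real.exp_pos _).le, mul_comm]
      gcongr
      rw [Real.norm_eq_abs, abs_le]
      constructor <;> nlinarith [mul_nonneg hK.le (sq_nonneg ((m : ℝ) - z + 1)),
        mul_nonneg hK.le (sq_nonneg ((m : ℝ) - z - 1))]
    have h := (convex_Icc (-r) r).norm_image_sub_le_of_norm_hasDerivWithin_le hd hb
      (abs_le.1 hy) (abs_le.1 hx)
    simp only [Real.norm_eq_abs] at h
    refine h.trans ?_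
    have := gw_pos K m
    gcongr
    have : 0 < B / K := by positivity
    linarith

lemma rho_bounds {K : ℝ} (hK : 0 < K) (r : ℝ) :
    ∃ D : ℝ, 0 < D ∧ ∀ m : ℤ,
      (∀ x, |x| ≤ r → |rho K x m| ≤ D * gw K m) ∧
      (∀ x y, |x| ≤ r → |y| ≤ r → |rho K x m - rho K y m| ≤ D * gw K m * |x - y|) := by
  obtain ⟨A, hA, hAm⟩ := weight_bounds hK r
  set S := ∑' m, gw K m with hS
  have hS0 : 0 ≤ S := tsum_nonneg fun m => (gw_pos K m).le
  set c := Real.exp (-K * r ^ 2) with hc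
  have hc0 : 0 < c := Real.exp_pos _
  have hsum : ∀ x, |x| ≤ r → Summable fun m : ℤ => Real.exp (-K * ((m : ℝ) - x) ^ 2) :=
    fun x hx => Summable.of_nonneg_of_le (fun _ => (Real.exp_pos _).le)
      (fun m => (hAm m).1 x hx) ((summable_gw hK).mul_left A)
  have hZ : ∀ x, |x| ≤ r → c ≤ Zfun K x := by
    intro x hx
    have h0 := (hsum x hx).le_tsum 0 (fun _ _ => (Real.exp_pos _).le)
    refine le_trans ?_ h0
    have hx2 : x ^ 2 ≤ r ^ 2 := sq_le_sq' (by linarith [(abs_le.1 hx).1]) (abs_le.1 hx).2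
    rw [hc, Real.exp_le_exp]
    push_cast
    nlinarith [mul_le_mul_of_nonneg_left hx2 hK.le]
  have hZL : ∀ x y, |x| ≤ r → |y| ≤ r → |Zfun K y - Zfun K x| ≤ A * S * |x - y| := by
    intro x y hx hy
    unfold Zfun
    rw [← (hsum y hy).tsum_sub (hsum x hx)]
    have hg : HasSum (fun m => A * gw K m * |x - y|) (A * S * |x - y|) :=
      ((summable_gw hK).hasSum.mul_left A).mul_right _
    rw [← Real.norm_eq_abs]
    refine tsum_of_norm_bounded hg fun m => ?_
    rw [Real.norm_eq_abs, abs_sub_comm]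
    exact (hAm m).2 x y hx hy
  refine ⟨A / c + A * (A * S) / (c * c), by positivity,
    fun m => ⟨fun x hx => ?_, fun x y hx hy => ?_⟩⟩
  · have hg := gw_pos K m
    have hz := hZ x hx
    have h1 : |rho K x m| ≤ A * gw K m / c := by
      unfold rho
      rw [abs_of_nonneg (div_nonneg (Real.exp_pos _).le (hc0.le.trans hz))]
      exact div_le_div₀ (by positivity) ((hAm m).1 x hx) hc0 hz
    have h2 : 0 ≤ A * (A * S) / (c * c) * gw K m := by positivity
    calc _ ≤ _ := h1
      _ = A / c * gw K m := by ring
      _ ≤ _ := by linarith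
  · have hg := gw_pos K m
    have hzx := hZ x hx
    have hzy := hZ y hy
    have px := hc0.trans_le hzx
    have py := hc0.trans_le hzy
    have hsplit : rho K x m - rho K y m =
        (Real.exp (-K * ((m : ℝ) - x) ^ 2) - Real.exp (-K * ((m : ℝ) - y) ^ 2)) / Zfun K x +
        Real.exp (-K * ((m : ℝ) - y) ^ 2) * (Zfun K y - Zfun K x) / (Zfun K x * Zfun K y) := by
      unfold rho
      field_simp
      ring
    rw [hsplit]
    refine (abs_add_le _ _).trans ?_
    rw [abs_div, abs_div, abs_mul, abs_of_pos px, abs_of_pos (mul_pos px py),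
      abs_of_pos (Real.exp_pos _)]
    have h1 := div_le_div₀ (by positivity) ((hAm m).2 x y hx hy) hc0 hzx
    have h2 := div_le_div₀ (by positivity)
      (mul_le_mul ((hAm m).1 y hy) (hZL x y hx hy) (abs_nonneg _) (by positivity))
      (mul_pos hc0 hc0) (mul_le_mul hzx hzy hc0.le px.le)
    refine (add_le_add h1 h2).trans (le_of_eq ?_)
    ring

lemma muInf_lipschitz {K : ℝ} (hK : 0 < K) {R : ℝ} (hR : 0 < R) :
    ∃ C : ℝ, 0 < C ∧ ∀ w w' : ℝ, |w| ≤ R → |w'| ≤ R → ∀ n : ℤ,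
      |muInf K w n - muInf K w' n| ≤ C * |w - w'| * Real.exp (-K * (n : ℝ) ^ 2 / 3) := by
  -- For `λ ∈ [0, 1]` and `|w| ≤ R`, both centres `λ` and `λ - w` lie in the ball of radius `R + 1`.
  obtain ⟨D, hD, hDm⟩ := rho_bounds hK (R + 1)
  have hs : Summable (fun m : ℤ => Real.exp (-(K / 8) * (m : ℝ) ^ 2)) :=
    summable_gauss (by positivity)
  set T := ∑' m : ℤ, Real.exp (-(K / 8) * (m : ℝ) ^ 2) with hT
  have hT0 : 0 < T := hs.tsum_pos (fun _ => (Real.exp_pos _).le) 0 (Real.exp_pos _)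
  have hball : ∀ w, |w| ≤ R → ∀ l ∈ Set.Icc (0 : ℝ) 1, |l - w| ≤ R + 1 := by
    intro w hw l hl
    have := abs_le.1 hw
    rw [abs_le]
    constructor <;> linarith [hl.1, hl.2]
  have hball0 : ∀ l ∈ Set.Icc (0 : ℝ) 1, |l| ≤ R + 1 := by
    intro l hl
    rw [abs_le]
    constructor <;> linarith [hl.1, hl.2]
  have hterm : ∀ w, |w| ≤ R → ∀ n m : ℤ, ∀ l ∈ Set.Icc (0 : ℝ) 1,
      ‖rho K (l - w) m * rho K l (m + n)‖ ≤
        D * D * Real.exp (-K * (n : ℝ) ^ 2 / 3) * Real.exp (-(K / 8) * (m : ℝ) ^ 2) := by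
    intro w hw n m l hl
    rw [norm_mul]
    have hg := gw_pos K m
    calc _ ≤ (D * gw K m) * (D * gw K (m + n)) :=
          mul_le_mul ((hDm m).1 _ (hball w hw l hl)) ((hDm (m + n)).1 _ (hball0 l hl))
            (abs_nonneg _) (by positivity)
      _ = D * D * (gw K m * gw K (m + n)) := by ring
      _ ≤ D * D * (Real.exp (-K * (n : ℝ) ^ 2 / 3) * Real.exp (-(K / 8) * (m : ℝ) ^ 2)) := by
          have := gauss_mul_le hK m n
          gcongr
      _ = _ := by ring
  have hrho : ∀ m : ℤ, ContinuousOn (fun x => rho K x m) {x | |x| ≤ R + 1} := by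
    intro m
    have hg := gw_pos K m
    refine (LipschitzOnWith.of_dist_le_mul (K := ⟨D * gw K m, by positivity⟩) ?_).continuousOn
    intro x hx y hy
    exact (hDm m).2 x y hx hy
  have hcont : ∀ w, |w| ≤ R → ∀ n : ℤ,
      ContinuousOn (fun l => muK K w l n) (Set.Icc (0 : ℝ) 1) := by
    intro w hw n
    unfold muK
    refine continuousOn_tsum (fun m => ?_)
      (hs.mul_left (D * D * Real.exp (-K * (n : ℝ) ^ 2 / 3)))
      (fun m l hl => hterm w hw n m l hl)
    exact ((hrho m).comp (by fun_prop) (fun l hl => hball w hw l hl)).mul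
      ((hrho (m + n)).mono hball0)
  have hint : ∀ w, |w| ≤ R → ∀ n : ℤ,
      IntervalIntegrable (fun l => muK K w l n) MeasureTheory.volume 0 1 := by
    intro w hw n
    refine ContinuousOn.intervalIntegrable ?_
    rw [Set.uIcc_of_le zero_le_one]
    exact hcont w hw n
  refine ⟨D * D * T, by positivity, fun w w' hw hw' n => ?_⟩
  unfold muInf
  rw [← intervalIntegral.integral_sub (hint w hw n) (hint w' hw' n)]
  have hpt : ∀ l ∈ Set.uIoc (0 : ℝ) 1, ‖muK K w l n - muK K w' l n‖ ≤
      D * D * T * |w - w'| * Real.exp (-K * (n : ℝ) ^ 2 / 3) := by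
    intro l hl
    rw [Set.uIoc_of_le zero_le_one] at hl
    have hl' : l ∈ Set.Icc (0 : ℝ) 1 := ⟨hl.1.le, hl.2⟩
    have hsm : ∀ w, |w| ≤ R → Summable fun m : ℤ => rho K (l - w) m * rho K l (m + n) :=
      fun w hw => Summable.of_norm_bounded
        (hs.mul_left (D * D * Real.exp (-K * (n : ℝ) ^ 2 / 3)))
        (fun m => hterm w hw n m l hl')
    unfold muK
    rw [← (hsm w hw).tsum_sub (hsm w' hw')]
    have hsum : HasSum (fun m : ℤ => D * D * |w - w'| * Real.exp (-K * (n : ℝ) ^ 2 / 3) *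
        Real.exp (-(K / 8) * (m : ℝ) ^ 2))
        (D * D * T * |w - w'| * Real.exp (-K * (n : ℝ) ^ 2 / 3)) := by
      have := hs.hasSum.mul_left (D * D * |w - w'| * Real.exp (-K * (n : ℝ) ^ 2 / 3))
      rw [← hT] at this
      refine (show D * D * T * |w - w'| * Real.exp (-K * (n : ℝ) ^ 2 / 3) =
        D * D * |w - w'| * Real.exp (-K * (n : ℝ) ^ 2 / 3) * T by ring) ▸ this
    refine tsum_of_norm_bounded hsum fun m => ?_
    have hg := gw_pos K m
    have hxy : |(l - w) - (l - w')| = |w - w'| := by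
      rw [abs_sub_comm w w']
      congr 1
      ring
    have h1 := (hDm m).2 _ _ (hball w hw l hl') (hball w' hw' l hl')
    rw [hxy] at h1
    rw [← sub_mul, norm_mul]
    calc _ ≤ (D * gw K m * |w - w'|) * (D * gw K (m + n)) :=
          mul_le_mul h1 ((hDm (m + n)).1 _ (hball0 l hl')) (abs_nonneg _) (by positivity)
      _ = D * D * |w - w'| * (gw K m * gw K (m + n)) := by ring
      _ ≤ D * D * |w - w'| *
            (Real.exp (-K * (n : ℝ) ^ 2 / 3) * Real.exp (-(K / 8) * (m : ℝ) ^ 2)) := by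
          have := gauss_mul_le hK m n
          gcongr
      _ = _ := by ring
  have := intervalIntegral.norm_integral_le_of_norm_le_const hpt
  simpa using this

theorem stmt6 (K : ℝ) (hK : 0 < K) :
    (∀ R : ℝ, 0 < R → ∃ C : ℝ, 0 < C ∧
      ∀ w w' : ℝ, |w| ≤ R → |w'| ≤ R → ∀ n : ℤ,
        |muInf K w n - muInf K w' n| ≤
          C * |w - w'| * Real.exp (-K * (n : ℝ) ^ 2 / 3)) ∧
    (∀ (v : ℕ → ℝ → ℝ) (vl : ℝ), DTendsto v vl →
      ∃ C : ℕ → ℝ → ℝ, DTendsto C 0 ∧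
        ∀ (N : ℕ) (ε : ℝ), 0 < ε → ∀ n : ℤ,
          |muInf K (v N ε) n - muInf K vl n| ≤
            C N ε * Real.exp (-K * (n : ℝ) ^ 2 / 3)) := by
  refine ⟨fun R hR => muInf_lipschitz hK hR, fun v vl hv => ?_⟩
  choose L hL0 hL using fun (R : ℝ) (hR : 0 < R) => muInf_lipschitz hK hR
  -- The maximum makes the radius the constant `|vl| + 1` as soon as `|v N ε - vl| ≤ 1`.
  have hrad : ∀ N ε, 0 < |vl| + max 1 |v N ε - vl| := fun N ε => by
    have := le_max_left 1 |v N ε - vl|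
    linarith [abs_nonneg vl]
  refine ⟨fun N ε => L _ (hrad N ε) * |v N ε - vl|, fun δ hδ => ?_, fun N ε _ n => ?_⟩
  · have hr1 : 0 < |vl| + 1 := by linarith [abs_nonneg vl]
    set M := L _ hr1 with hM
    have hM0 : 0 < M := hL0 _ hr1
    have hη : 0 < min 1 (δ / M) := lt_min one_pos (by positivity)
    obtain ⟨ε₀, hε₀, h⟩ := hv (min 1 (δ / M) / 2) (by positivity)
    refine ⟨ε₀, hε₀, fun ε h1 h2 => ?_⟩
    have hlt : elimsup (fun N => |v N ε - vl|) < ((min 1 (δ / M) : ℝ) : EReal) :=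
      (h ε h1 h2).trans_lt (EReal.coe_lt_coe_iff.2 (by linarith))
    refine Filter.limsup_le_of_le (by isBoundedDefault) ?_
    filter_upwards [Filter.eventually_lt_of_limsup_lt hlt] with N hN
    have hN' : |v N ε - vl| < min 1 (δ / M) := EReal.coe_lt_coe_iff.1 hN
    have ha : |v N ε - vl| ≤ 1 := (hN'.trans_le (min_le_left _ _)).le
    have hb : |v N ε - vl| ≤ δ / M := (hN'.trans_le (min_le_right _ _)).le
    have hLM : L _ (hrad N ε) = M := by
      rw [hM]
      congr 1
      rw [max_eq_left ha]
    rw [EReal.coe_le_coe_iff, hLM, sub_zero, abs_of_nonneg (by positivity), mul_comm]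
    exact (le_div_iff₀ hM0).1 hb
  · refine hL _ (hrad N ε) _ _ ?_ ?_ n
    · have h1 := abs_add_le (v N ε - vl) vl
      rw [sub_add_cancel] at h1
      linarith [le_max_right 1 |v N ε - vl|]
    · linarith [le_max_left 1 |v N ε - vl|]
end
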